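/- Let h : ℝ^N → ℝ ∪ {+∞} be a proper, lower semicontinuous, convex function, let λ > 0, let D ∈ ℝ^{N×N} be symmetric positive definite, and let U ∈ ℝ^{N×r} be such that W = D − U Uᵀ is symmetric positive definite. Then for every x ∈ ℝ^N there exists a unique γ* ∈ ℝ^r satisfying Uᵀ ( x − prox_{λh}^D ( x + D^{-1} U γ* ) ) + γ* = 0, and moreover prox_{λh}^W(x) = prox_{λh}^D ( x + D^{-1} U γ* ). -/

import Mathlib

/-!
A point `z` is a proximal point `prox_{λh}^M (p)` for a positive definite `M` exactly when
`M (p - z)` is a subgradient of `λ h` at `z` (`isWProx_iff_isSubgrad`). For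
`p = x + D⁻¹ U γ` and `γ = -Uᵀ (x - z)`,
`D (p - z) = D (x - z) + U γ = (D - U Uᵀ) (x - z) = W (x - z)`,
so the optimality condition for `prox^D` at `p` is the one for `prox^W` at `x`. Hence the solutions
`γ` of the root-finding problem are precisely the vectors `-Uᵀ (x - z)` with `z = prox^W (x)`, and
the claim reduces to existence and uniqueness of that proximal point.

Uniqueness is monotonicity of the subdifferential (`IsSubgrad.unique`). Existence
(`exists_isWProx`) is the direct method: a proper lower semicontinuous convex `h` decreases at most
linearly (`exists_linear_minorant`), whereas the weighted norm grows quadratically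
(`exists_quadratic_lower_bound`), so minimizing over a large closed ball is enough.
-/

open Matrix

/-- `z` is a minimizer over `ℝ^N` of the weighted proximal objective
`u ↦ lam * h u + (1/2) ‖u - x‖_W²`, i.e. `z = prox_{lam h}^W (x)` when the
minimizer is unique. -/
def IsWProx {N : ℕ} (h : (Fin N → ℝ) → EReal) (lam : ℝ)
    (W : Matrix (Fin N) (Fin N) ℝ) (x z : Fin N → ℝ) : Prop :=
  ∀ u : Fin N → ℝ,
    (lam : EReal) * h z + (((1 / 2 : ℝ) * ((z - x) ⬝ᵥ W.mulVec (z - x)) : ℝ) : EReal) ≤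
      (lam : EReal) * h u + (((1 / 2 : ℝ) * ((u - x) ⬝ᵥ W.mulVec (u - x)) : ℝ) : EReal)

/-- Convexity of an extended-real-valued function, in the form used in `stmt1`. -/
def EConvex {N : ℕ} (h : (Fin N → ℝ) → EReal) : Prop :=
  ∀ x y : Fin N → ℝ, ∀ a b : ℝ, 0 ≤ a → 0 ≤ b → a + b = 1 →
    h (a • x + b • y) ≤ (a : EReal) * h x + (b : EReal) * h y

/-- `g` is a subgradient of `lam * h` at a point `z` where `h` is finite; the subgradient inequality
is only required at the points where `h` is finite. -/
def IsSubgrad {N : ℕ} (h : (Fin N → ℝ) → EReal) (lam : ℝ) (z g : Fin N → ℝ) : Prop :=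
  ∃ a : ℝ, h z = a ∧ ∀ (u : Fin N → ℝ) (b : ℝ), h u = b → lam * a + g ⬝ᵥ (u - z) ≤ lam * b

lemma exists_real_of_ne {e : EReal} (h1 : e ≠ ⊤) (h2 : e ≠ ⊥) : ∃ a : ℝ, e = a :=
  ⟨e.toReal, (EReal.coe_toReal h1 h2).symm⟩

lemma EConvex.real {N : ℕ} {h : (Fin N → ℝ) → EReal} (hconv : EConvex h)
    (hnobot : ∀ x, h x ≠ ⊥) {x y : Fin N → ℝ} {α β : ℝ} (hx : h x = α) (hy : h y = β)
    {a b : ℝ} (ha : 0 ≤ a) (hb : 0 ≤ b) (hab : a + b = 1) :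
    ∃ c : ℝ, h (a • x + b • y) = c ∧ c ≤ a * α + b * β := by
  have key := hconv x y a b ha hb hab
  rw [hx, hy] at key
  have key2 : h (a • x + b • y) ≤ ((a * α + b * β : ℝ) : EReal) := by
    push_cast
    exact key
  obtain ⟨c, hc⟩ := exists_real_of_ne (ne_top_of_le_ne_top (EReal.coe_ne_top _) key2) (hnobot _)
  refine ⟨c, hc, ?_⟩
  rw [hc] at key2
  exact_mod_cast key2

/-- The proximal condition only has to be tested at points where `h` is finite, where it is an
inequality between real numbers. -/
lemma isWProx_iff_real {N : ℕ} {h : (Fin N → ℝ) → EReal} (hproper : ∃ x, h x ≠ ⊤)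
    (hnobot : ∀ x, h x ≠ ⊥) {lam : ℝ} (hlam : 0 < lam) (M : Matrix (Fin N) (Fin N) ℝ)
    (p z : Fin N → ℝ) :
    IsWProx h lam M p z ↔ ∃ a : ℝ, h z = a ∧ ∀ (u : Fin N → ℝ) (b : ℝ), h u = b →
      lam * a + 1 / 2 * ((z - p) ⬝ᵥ M.mulVec (z - p)) ≤
        lam * b + 1 / 2 * ((u - p) ⬝ᵥ M.mulVec (u - p)) := by
  constructor
  · intro H
    obtain ⟨x0, hx0⟩ := hproper
    obtain ⟨c, hc⟩ := exists_real_of_ne hx0 (hnobot x0)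
    have hz : h z ≠ ⊤ := by
      intro hz
      have := H x0
      rw [hz, hc, EReal.coe_mul_top_of_pos hlam, EReal.top_add_coe, ← EReal.coe_mul,
        ← EReal.coe_add] at this
      exact EReal.coe_ne_top _ (top_le_iff.1 this)
    obtain ⟨a, ha⟩ := exists_real_of_ne hz (hnobot z)
    refine ⟨a, ha, fun u b hu => ?_⟩
    have := H u
    rw [ha, hu, ← EReal.coe_mul, ← EReal.coe_add, ← EReal.coe_mul, ← EReal.coe_add] at this
    exact EReal.coe_le_coe_iff.1 this
  · rintro ⟨a, ha, H⟩ u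
    by_cases hu : h u = ⊤
    · rw [hu, EReal.coe_mul_top_of_pos hlam, EReal.top_add_coe]
      exact le_top
    · obtain ⟨b, hb⟩ := exists_real_of_ne hu (hnobot u)
      rw [ha, hb, ← EReal.coe_mul, ← EReal.coe_add, ← EReal.coe_mul, ← EReal.coe_add]
      exact EReal.coe_le_coe_iff.2 (H u b hb)

lemma dotProduct_mulVec_comm_of_posDef {N : ℕ} {M : Matrix (Fin N) (Fin N) ℝ} (hM : M.PosDef)
    (v w : Fin N → ℝ) : v ⬝ᵥ M.mulVec w = w ⬝ᵥ M.mulVec v := by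
  have hs : Mᵀ = M := by
    have := hM.isHermitian.eq
    rwa [conjTranspose_eq_transpose_of_trivial] at this
  rw [dotProduct_mulVec, ← mulVec_transpose, hs, dotProduct_comm]

lemma quadratic_expand {N : ℕ} {M : Matrix (Fin N) (Fin N) ℝ} (hM : M.PosDef)
    (v w : Fin N → ℝ) (t : ℝ) : (v + t • w) ⬝ᵥ M.mulVec (v + t • w) =
      v ⬝ᵥ M.mulVec v + 2 * t * (w ⬝ᵥ M.mulVec v) + t ^ 2 * (w ⬝ᵥ M.mulVec w) := by
  have := dotProduct_mulVec_comm_of_posDef hM v w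
  simp only [mulVec_add, mulVec_smul, dotProduct_add, add_dotProduct, smul_dotProduct,
    dotProduct_smul, smul_eq_mul, this]
  ring

lemma posDef_quadratic_nonneg {N : ℕ} {M : Matrix (Fin N) (Fin N) ℝ} (hM : M.PosDef)
    (v : Fin N → ℝ) : 0 ≤ v ⬝ᵥ M.mulVec v := by
  simpa using hM.posSemidef.dotProduct_mulVec_nonneg v

lemma nonneg_of_forall_small {s C : ℝ} (H : ∀ t : ℝ, 0 < t → t ≤ 1 → 0 ≤ t * s + t ^ 2 * C) :
    0 ≤ s := by
  by_contra! hs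
  have hC : 0 < |C| + 1 := by positivity
  have hsC : 0 < |C| + 1 - s := by linarith
  -- at this `t` one has `t * |C| < -s`
  have ht0 : 0 < -s / (|C| + 1 - s) := div_pos (by linarith) hsC
  have ht1 : -s / (|C| + 1 - s) ≤ 1 := by
    rw [div_le_one hsC]
    linarith
  have key := H _ ht0 ht1
  set t := -s / (|C| + 1 - s) with ht
  have e : t * (|C| + 1 - s) = -s := div_mul_cancel₀ _ hsC.ne'
  have h1 : 0 ≤ t * (s + t * C) := by nlinarith
  have h2 : 0 ≤ s + t * C := nonneg_of_mul_nonneg_right h1 ht0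
  have h3 : t * C ≤ t * |C| := mul_le_mul_of_nonneg_left (le_abs_self C) ht0.le
  have h4 : t * s < 0 := mul_neg_of_pos_of_neg ht0 hs
  nlinarith

/-- The optimality condition of the weighted proximal problem. -/
lemma isWProx_iff_isSubgrad {N : ℕ} {h : (Fin N → ℝ) → EReal} (hproper : ∃ x, h x ≠ ⊤)
    (hnobot : ∀ x, h x ≠ ⊥) (hconv : EConvex h) {lam : ℝ} (hlam : 0 < lam)
    {M : Matrix (Fin N) (Fin N) ℝ} (hM : M.PosDef) (p z : Fin N → ℝ) :
    IsWProx h lam M p z ↔ IsSubgrad h lam z (M.mulVec (p - z)) := by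
  have hlin : ∀ u, M.mulVec (p - z) ⬝ᵥ (u - z) = -((u - z) ⬝ᵥ M.mulVec (z - p)) := by
    intro u
    rw [← neg_sub z p, mulVec_neg, neg_dotProduct, dotProduct_comm]
  rw [isWProx_iff_real hproper hnobot hlam]
  refine exists_congr fun a => and_congr_right fun ha => ⟨fun H u b hb => ?_, fun H u b hb => ?_⟩
  · rw [hlin]
    -- compare `z` with the points `z + t (u - z)` of the segment and let `t` tend to `0`
    have key : 0 ≤ lam * (b - a) + (u - z) ⬝ᵥ M.mulVec (z - p) := by
      refine nonneg_of_forall_small (C := 1 / 2 * ((u - z) ⬝ᵥ M.mulVec (u - z))) ?_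
      intro t ht0 ht1
      obtain ⟨c, hc, hcle⟩ := hconv.real hnobot ha hb (sub_nonneg.2 ht1) ht0.le (by ring)
      have h1 := H _ c hc
      have h2 : (1 - t) • z + t • u - p = (z - p) + t • (u - z) := by module
      rw [h2, quadratic_expand hM] at h1
      have h3 := mul_le_mul_of_nonneg_left hcle hlam.le
      linarith
    linarith
  · have h1 := H u b hb
    rw [hlin] at h1
    have h2 : u - p = (z - p) + (1 : ℝ) • (u - z) := by module
    rw [h2, quadratic_expand hM]
    have := posDef_quadratic_nonneg hM (u - z)
    linarith

lemma IsSubgrad.unique {N : ℕ} {h : (Fin N → ℝ) → EReal} {lam : ℝ}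
    {M : Matrix (Fin N) (Fin N) ℝ} (hM : M.PosDef) {x z w : Fin N → ℝ}
    (hz : IsSubgrad h lam z (M.mulVec (x - z))) (hw : IsSubgrad h lam w (M.mulVec (x - w))) :
    z = w := by
  obtain ⟨a, ha, H1⟩ := hz
  obtain ⟨b, hb, H2⟩ := hw
  have h1 := H1 w b hb
  have h2 := H2 z a ha
  by_contra hne
  have h3 : 0 < (w - z) ⬝ᵥ M.mulVec (w - z) := by
    simpa using hM.dotProduct_mulVec_pos (sub_ne_zero.2 (Ne.symm hne))
  have h4 : (w - z) ⬝ᵥ M.mulVec (w - z) =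
      M.mulVec (x - z) ⬝ᵥ (w - z) + M.mulVec (x - w) ⬝ᵥ (z - w) := by
    rw [← neg_sub w z, dotProduct_neg, ← sub_eq_add_neg, ← sub_dotProduct, ← mulVec_sub,
      dotProduct_comm]
    congr 2
    abel
  linarith

lemma exists_quadratic_lower_bound {N : ℕ} {M : Matrix (Fin N) (Fin N) ℝ} (hM : M.PosDef) :
    ∃ c : ℝ, 0 < c ∧ ∀ v : Fin N → ℝ, c * ‖v‖ ^ 2 ≤ v ⬝ᵥ M.mulVec v := by
  rcases (Metric.sphere (0 : Fin N → ℝ) 1).eq_empty_or_nonempty with he | hne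
  · -- an empty unit sphere means that `ℝ^N` is trivial
    refine ⟨1, one_pos, fun v => ?_⟩
    have hv : v = 0 := by
      by_contra hv
      have : ‖v‖⁻¹ • v ∈ Metric.sphere (0 : Fin N → ℝ) 1 := by
        simp [norm_smul, inv_mul_cancel₀ (norm_ne_zero_iff.2 hv)]
      simp [he] at this
    simp [hv]
  · have hcont : Continuous fun v : Fin N → ℝ => v ⬝ᵥ M.mulVec v := by fun_prop
    obtain ⟨v0, hv0, hmin⟩ := (isCompact_sphere (0 : Fin N → ℝ) 1).exists_isMinOn hne
      hcont.continuousOn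
    have hv0' : v0 ≠ 0 := by
      rintro rfl
      simp at hv0
    refine ⟨v0 ⬝ᵥ M.mulVec v0, by simpa using hM.dotProduct_mulVec_pos hv0', fun v => ?_⟩
    by_cases hv : v = 0
    · simp [hv]
    have hvn : 0 < ‖v‖ := norm_pos_iff.2 hv
    have hmem : ‖v‖⁻¹ • v ∈ Metric.sphere (0 : Fin N → ℝ) 1 := by
      simp [norm_smul, inv_mul_cancel₀ hvn.ne']
    have h1 : v0 ⬝ᵥ M.mulVec v0 ≤ (‖v‖⁻¹ • v) ⬝ᵥ M.mulVec (‖v‖⁻¹ • v) := hmin hmem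
    simp only [mulVec_smul, smul_dotProduct, dotProduct_smul, smul_eq_mul] at h1
    calc v0 ⬝ᵥ M.mulVec v0 * ‖v‖ ^ 2
        ≤ ‖v‖⁻¹ * (‖v‖⁻¹ * (v ⬝ᵥ M.mulVec v)) * ‖v‖ ^ 2 := by gcongr
      _ = v ⬝ᵥ M.mulVec v := by field_simp

/-- A proper lower semicontinuous convex function decreases at most linearly. On the unit ball
around a point `x0` of the domain it is bounded below by semicontinuity, and convexity along the
ray from `x0` propagates that bound outwards. -/
lemma exists_linear_minorant {N : ℕ} {h : (Fin N → ℝ) → EReal}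
    (hnobot : ∀ x, h x ≠ ⊥) (hlsc : LowerSemicontinuous h) (hconv : EConvex h)
    {x0 : Fin N → ℝ} {a0 : ℝ} (hx0 : h x0 = a0) :
    ∃ m C : ℝ, 0 ≤ C ∧ ∀ (u : Fin N → ℝ) (b : ℝ), h u = b → m - C * ‖u - x0‖ ≤ b := by
  have hx0mem : x0 ∈ Metric.closedBall x0 1 := Metric.mem_closedBall_self zero_le_one
  obtain ⟨v0, -, hmin⟩ := (hlsc.lowerSemicontinuousOn _).exists_isMinOn ⟨x0, hx0mem⟩
    (isCompact_closedBall x0 1)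
  have hle : h v0 ≤ h x0 := hmin hx0mem
  obtain ⟨m, hm⟩ := exists_real_of_ne
    (ne_top_of_le_ne_top (by rw [hx0]; exact EReal.coe_ne_top _) hle) (hnobot v0)
  have hma : m ≤ a0 := by
    rw [hm, hx0] at hle
    exact_mod_cast hle
  have hball : ∀ (u : Fin N → ℝ) (b : ℝ), ‖u - x0‖ ≤ 1 → h u = b → m ≤ b := by
    intro u b hu hb
    have : h v0 ≤ h u := hmin (by rwa [Metric.mem_closedBall, dist_eq_norm])
    rw [hm, hb] at this
    exact_mod_cast this
  refine ⟨m, a0 - m, sub_nonneg.2 hma, fun u b hb => ?_⟩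
  rcases le_total ‖u - x0‖ 1 with h1 | h1
  · have := hball u b h1 hb
    have := mul_nonneg (sub_nonneg.2 hma) (norm_nonneg (u - x0))
    linarith
  · set R := ‖u - x0‖ with hR
    have hR0 : 0 < R := by linarith
    have hRi : R⁻¹ ≤ 1 := inv_le_one_of_one_le₀ h1
    obtain ⟨c, hc, hcle⟩ := hconv.real hnobot hx0 hb (sub_nonneg.2 hRi) (inv_pos.2 hR0).le
      (by ring)
    have hmc : m ≤ c := by
      refine hball _ c ?_ hc
      have : (1 - R⁻¹) • x0 + R⁻¹ • u - x0 = R⁻¹ • (u - x0) := by module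
      rw [this, norm_smul, norm_inv, Real.norm_eq_abs, abs_of_pos hR0, ← hR,
        inv_mul_cancel₀ hR0.ne']
    have h2 : R * m ≤ R * ((1 - R⁻¹) * a0 + R⁻¹ * b) :=
      mul_le_mul_of_nonneg_left (hmc.trans hcle) hR0.le
    have h3 : R * ((1 - R⁻¹) * a0 + R⁻¹ * b) = (R - 1) * a0 + b := by
      field_simp
    rw [h3] at h2
    linarith

lemma exists_isWProx {N : ℕ} {h : (Fin N → ℝ) → EReal} (hproper : ∃ x, h x ≠ ⊤)
    (hnobot : ∀ x, h x ≠ ⊥) (hlsc : LowerSemicontinuous h) (hconv : EConvex h)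
    {lam : ℝ} (hlam : 0 < lam) {M : Matrix (Fin N) (Fin N) ℝ} (hM : M.PosDef) (p : Fin N → ℝ) :
    ∃ z, IsWProx h lam M p z := by
  obtain ⟨x0, hx0t⟩ := id hproper
  obtain ⟨a0, hx0⟩ := exists_real_of_ne hx0t (hnobot x0)
  obtain ⟨m, C, hC, hlin⟩ := exists_linear_minorant hnobot hlsc hconv hx0
  obtain ⟨c, hc, hquad⟩ := exists_quadratic_lower_bound hM
  -- dividing the objective by `lam` keeps the extended-real part equal to `h` itself
  set q : (Fin N → ℝ) → ℝ := fun u => 1 / (2 * lam) * ((u - p) ⬝ᵥ M.mulVec (u - p)) with hq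
  have hqc : Continuous q := by fun_prop
  have hF : LowerSemicontinuous fun u => h u + (q u : EReal) := by
    refine hlsc.add' (continuous_coe_real_ereal.comp hqc).lowerSemicontinuous fun u => ?_
    exact EReal.continuousAt_add (Or.inr (EReal.coe_ne_bot _)) (Or.inr (EReal.coe_ne_top _))
  have hqlow : ∀ u, c / (2 * lam) * ‖u - p‖ ^ 2 ≤ q u := by
    intro u
    calc c / (2 * lam) * ‖u - p‖ ^ 2 = 1 / (2 * lam) * (c * ‖u - p‖ ^ 2) := by ring
      _ ≤ q u := mul_le_mul_of_nonneg_left (hquad _) (by positivity)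
  set k := c / (2 * lam) with hk
  have hk0 : 0 < k := by positivity
  -- beyond the radius `R` the quadratic lower bound exceeds the value of the objective at `x0`
  set A := a0 + q x0 - m + C * ‖p - x0‖ with hA
  set R := ‖x0 - p‖ + 1 + (C + |A|) / k with hRdef
  have hR1 : 1 ≤ R := by
    have : 0 ≤ (C + |A|) / k := by positivity
    have := norm_nonneg (x0 - p)
    linarith
  have hx0R : x0 ∈ Metric.closedBall p R := by
    rw [Metric.mem_closedBall, dist_eq_norm]
    have : 0 ≤ (C + |A|) / k := by positivity
    linarith
  obtain ⟨z, -, hmin⟩ := (hF.lowerSemicontinuousOn _).exists_isMinOn ⟨x0, hx0R⟩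
    (isCompact_closedBall p R)
  have hzx0 : h z + (q z : EReal) ≤ h x0 + (q x0 : EReal) := hmin hx0R
  have hzt : h z ≠ ⊤ := by
    intro hz
    rw [hz, hx0, EReal.top_add_coe, ← EReal.coe_add] at hzx0
    exact EReal.coe_ne_top _ (top_le_iff.1 hzx0)
  obtain ⟨a, ha⟩ := exists_real_of_ne hzt (hnobot z)
  rw [ha, hx0, ← EReal.coe_add, ← EReal.coe_add, EReal.coe_le_coe_iff] at hzx0
  refine ⟨z, (isWProx_iff_real hproper hnobot hlam M p z).2 ⟨a, ha, fun u b hb => ?_⟩⟩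
  have hmain : a + q z ≤ b + q u := by
    by_cases hu : u ∈ Metric.closedBall p R
    · have h1 : h z + (q z : EReal) ≤ h u + (q u : EReal) := hmin hu
      rw [ha, hb, ← EReal.coe_add, ← EReal.coe_add, EReal.coe_le_coe_iff] at h1
      exact h1
    · rw [Metric.mem_closedBall, dist_eq_norm, not_le] at hu
      have h1 := hlin u b hb
      have h2 := hqlow u
      have h3 : ‖u - x0‖ ≤ ‖u - p‖ + ‖p - x0‖ := norm_sub_le_norm_sub_add_norm_sub u p x0
      have h4 : C * ‖u - x0‖ ≤ C * ‖u - p‖ + C * ‖p - x0‖ := by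
        rw [← mul_add]
        exact mul_le_mul_of_nonneg_left h3 hC
      set s := ‖u - p‖ with hs
      have hs1 : 1 ≤ s := by linarith
      have h5 : C + |A| ≤ k * s := by
        have : (C + |A|) / k ≤ s := by
          have := norm_nonneg (x0 - p)
          linarith
        rw [div_le_iff₀ hk0] at this
        linarith
      have h6 : (C + |A|) * s ≤ k * s ^ 2 := by nlinarith
      have h7 : |A| ≤ |A| * s := le_mul_of_one_le_right (abs_nonneg A) hs1
      have h8 := le_abs_self A
      linarith
  have e : ∀ v, 1 / 2 * ((v - p) ⬝ᵥ M.mulVec (v - p)) = lam * q v := by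
    intro v
    simp only [hq]
    field_simp
  rw [e, e, ← mul_add, ← mul_add]
  exact mul_le_mul_of_nonneg_left hmain hlam.le

/-- The residual of `prox^D` at the shifted point `x + D⁻¹ U γ` is the residual of `prox^W`
at `x`. -/
lemma residual_eq {N r : ℕ} {D : Matrix (Fin N) (Fin N) ℝ} (hD : D.PosDef)
    {U : Matrix (Fin N) (Fin r) ℝ} {x z : Fin N → ℝ} {γ : Fin r → ℝ}
    (hγ : Uᵀ.mulVec (x - z) + γ = 0) :
    D.mulVec (x + D⁻¹.mulVec (U.mulVec γ) - z) = (D - U * Uᵀ).mulVec (x - z) := by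
  have hdet : IsUnit D.det := hD.det_pos.ne'.isUnit
  have h1 : γ = -Uᵀ.mulVec (x - z) := eq_neg_of_add_eq_zero_right hγ
  have h2 : x + D⁻¹.mulVec (U.mulVec γ) - z = (x - z) + D⁻¹.mulVec (U.mulVec γ) := by abel
  rw [h2, mulVec_add, mulVec_mulVec _ D, mul_nonsing_inv D hdet, one_mulVec, sub_mulVec, h1,
    mulVec_neg, mulVec_mulVec, ← sub_eq_add_neg]

/-- for `W = D − U Uᵀ` symmetric positive definite, with `D` symmetric positive definite, there is a unique
`γ*` with `Uᵀ (x − prox_{λh}^D (x + D⁻¹ U γ*)) + γ* = 0`, and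
`prox_{λh}^W (x) = prox_{λh}^D (x + D⁻¹ U γ*)`. -/
theorem stmt1 {N r : ℕ} (h : (Fin N → ℝ) → EReal)
    (hproper : ∃ x, h x ≠ ⊤) (hnobot : ∀ x, h x ≠ ⊥)
    (hlsc : LowerSemicontinuous h)
    (hconv : ∀ x y : Fin N → ℝ, ∀ a b : ℝ, 0 ≤ a → 0 ≤ b → a + b = 1 →
      h (a • x + b • y) ≤ (a : EReal) * h x + (b : EReal) * h y)
    (lam : ℝ) (hlam : 0 < lam)
    (D : Matrix (Fin N) (Fin N) ℝ) (hDsymm : D.IsSymm) (hDpos : D.PosDef)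
    (U : Matrix (Fin N) (Fin r) ℝ)
    (W : Matrix (Fin N) (Fin N) ℝ) (hW : W = D - U * Uᵀ) (hWpos : W.PosDef)
    (x : Fin N → ℝ) :
    (∃! γ : Fin r → ℝ, ∃ z : Fin N → ℝ,
        IsWProx h lam D (x + D⁻¹.mulVec (U.mulVec γ)) z ∧
          Uᵀ.mulVec (x - z) + γ = 0) ∧
    (∀ γ : Fin r → ℝ, ∀ z : Fin N → ℝ,
        IsWProx h lam D (x + D⁻¹.mulVec (U.mulVec γ)) z →
          Uᵀ.mulVec (x - z) + γ = 0 → IsWProx h lam W x z) := by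
  have hequiv : ∀ (γ : Fin r → ℝ) (z : Fin N → ℝ), Uᵀ.mulVec (x - z) + γ = 0 →
      (IsWProx h lam D (x + D⁻¹.mulVec (U.mulVec γ)) z ↔ IsWProx h lam W x z) := by
    intro γ z hγ
    rw [isWProx_iff_isSubgrad hproper hnobot hconv hlam hDpos,
      isWProx_iff_isSubgrad hproper hnobot hconv hlam hWpos, residual_eq hDpos hγ, hW]
  refine ⟨?_, fun γ z hz hγ => (hequiv γ z hγ).1 hz⟩
  obtain ⟨z, hz⟩ := exists_isWProx hproper hnobot hlsc hconv hlam hWpos x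
  have hγ : Uᵀ.mulVec (x - z) + -Uᵀ.mulVec (x - z) = 0 := add_neg_cancel _
  refine ⟨-Uᵀ.mulVec (x - z), ⟨z, (hequiv _ z hγ).2 hz, hγ⟩, ?_⟩
  rintro γ ⟨w, hw, hwγ⟩
  have hwW := (hequiv γ w hwγ).1 hw
  rw [isWProx_iff_isSubgrad hproper hnobot hconv hlam hWpos] at hz hwW
  rw [IsSubgrad.unique hWpos hz hwW]
  exact eq_neg_of_add_eq_zero_right hwγ
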